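/- Let k be a field and let Y be a retract rational k-variety. Then there exists a rational map Y ⇢ P^{dim Y + 1} which admits a rational section, i.e. a rational map g : P^{dim Y + 1} ⇢ Y such that the composition g ∘ f is defined and coincides with the identity as a rational map. -/

import Mathlib

open AlgebraicGeometry CategoryTheory CategoryTheory.Limits TopologicalSpace

universe u

attribute [local instance] MvPolynomial.gradedAlgebra

noncomputable def ProjSpace (k : Type u) [Field k] (N : ℕ) : Scheme.{u} :=
  Proj (MvPolynomial.homogeneousSubmodule (Fin (N + 1)) k)

noncomputable def ProjSpace.structMap (k : Type u) [Field k] (N : ℕ) :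
    ProjSpace k N ⟶ Spec (CommRingCat.of k) :=
  Proj.toSpecZero _ ≫ Spec.map (CommRingCat.ofHom
    ((GradedRing.projZeroRingHom' (MvPolynomial.homogeneousSubmodule (Fin (N + 1)) k)).comp
      (MvPolynomial.C : k →+* MvPolynomial (Fin (N + 1)) k)))

def AlgebraicGeometry.Scheme.PartialMap.CompEqId {X Y : Scheme.{u}}
    (f : X.PartialMap Y) (g : Y.PartialMap X) : Prop :=
  ∃ (U : X.Opens) (_ : Dense (U : Set X)) (hle : U ≤ f.domain)
    (lift : (U : Scheme.{u}) ⟶ (g.domain : Scheme.{u})),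
      lift ≫ g.domain.ι = X.homOfLE hle ≫ f.hom ∧ lift ≫ g.hom = U.ι

def AlgebraicGeometry.Scheme.PartialMap.IsOverStruct {X Y B : Scheme.{u}}
    (sX : X ⟶ B) (sY : Y ⟶ B) (f : X.PartialMap Y) : Prop :=
  f.hom ≫ sY = f.domain.ι ≫ sX

/-- A scheme `X` with structure morphism `sX` over a field `K` is retract rational if the
identity on `X` factors rationally through some projective space `ℙ^N_K`:  there are
rational (partial) maps `f : X ⤏ ℙ^N` and `g : ℙ^N ⤏ X` over `K` such that `g ∘ f` is
defined and agrees with the identity as a rational map. -/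
def IsRetractRational (K : Type u) [Field K] (X : Scheme.{u})
    (sX : X ⟶ Spec (CommRingCat.of K)) : Prop :=
  ∃ (N : ℕ), 1 ≤ N ∧
    ∃ (f : X.PartialMap (ProjSpace K N)) (g : (ProjSpace K N).PartialMap X),
      f.IsOverStruct sX (ProjSpace.structMap K N) ∧
      g.IsOverStruct (ProjSpace.structMap K N) sX ∧
      f.CompEqId g

/-- Base change of a `k`-scheme along a field extension `k → K`. -/
noncomputable def baseChange {k : Type u} [Field k] (K : Type u) [Field K] [Algebra k K]
    {X : Scheme.{u}} (sX : X ⟶ Spec (CommRingCat.of k)) : Scheme.{u} :=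
  Limits.pullback sX (Spec.map (CommRingCat.ofHom (algebraMap k K)))

/-- The structure morphism of the base change. -/
noncomputable def baseChangeStruct {k : Type u} [Field k] (K : Type u) [Field K] [Algebra k K]
    {X : Scheme.{u}} (sX : X ⟶ Spec (CommRingCat.of k)) :
    baseChange K sX ⟶ Spec (CommRingCat.of K) :=
  Limits.pullback.snd sX (Spec.map (CommRingCat.ofHom (algebraMap k K)))

/-- A `k`-scheme is geometrically retract rational if its base change to an algebraic
closure of `k` is retract rational. -/
def IsGeometricallyRetractRational (k : Type u) [Field k] (X : Scheme.{u})
    (sX : X ⟶ Spec (CommRingCat.of k)) : Prop :=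
  IsRetractRational (AlgebraicClosure k) (baseChange (AlgebraicClosure k) sX)
    (baseChangeStruct (AlgebraicClosure k) sX)

/-!
Restricting a rational section of `Y ⇢ ℙ^N` to the generic point of `Y` gives a local ring `A` of
`𝔸^N` and `k`-algebra maps `K(Y) → A → K(Y)` composing to the identity. As a subring of `A`, the
field `K(Y)` is geometrically reduced over `k`, hence separably generated by MacLane's criterion,
and by the primitive element theorem it is generated by `dim Y + 1` elements. These elements exhibit
`K(Y)` as the residue field of a local ring `B` of `𝔸^{dim Y + 1}`: this is the classical fact that
`Y` is birational to a hypersurface. Since `A` is a localization of a polynomial ring, `A → K(Y)`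
lifts along the surjection `B → K(Y)` once preimages of the variables are chosen. The composite
`K(Y) → A → B → K(Y)` is again the identity, and it spreads out to the required rational maps.
-/

/-! ### Separable generation of function fields -/

open TensorProduct in
theorem linearIndependent_pow_of_isReduced_tensorProduct {k A ι : Type*} (K : Type*) [Field k]
    [Field K] [CommRing A] [Algebra k K] [Algebra k A] (p : ℕ) [Fact p.Prime]
    [ExpChar K p] [PerfectRing K p] [IsReduced (K ⊗[k] A)] {v : ι → A}
    (hv : LinearIndependent k v) :
    LinearIndependent k fun i ↦ v i ^ p := by
  have hp : p ≠ 0 := (Fact.out : p.Prime).ne_zero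
  rw [linearIndependent_iff']
  intro s c hc i hi
  have : Nontrivial A := ⟨v i, 0, hv.ne_zero i⟩
  have : ExpChar (K ⊗[k] A) p :=
    expChar_of_injective_algebraMap (FaithfulSMul.algebraMap_injective K (K ⊗[k] A)) p
  choose b hb using fun j ↦ (frobeniusEquiv K p).surjective (algebraMap k K (c j))
  simp only [frobeniusEquiv_apply, frobenius_def] at hb
  have hterm (j : ι) : (b j • (1 : K) ⊗ₜ[k] v j) ^ p = 1 ⊗ₜ[k] (c j • v j ^ p) := by
    rw [smul_tmul', Algebra.TensorProduct.tmul_pow, smul_eq_mul, mul_one, hb,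
      Algebra.algebraMap_eq_smul_one, smul_tmul]
  have hpow : (∑ j ∈ s, b j • (1 : K) ⊗ₜ[k] v j) ^ p = 0 := by
    rw [sum_pow_char, Finset.sum_congr rfl fun j _ ↦ hterm j, ← tmul_sum, hc, tmul_zero]
  have hv' : LinearIndependent K fun j ↦ (1 : K) ⊗ₜ[k] v j :=
    Module.Flat.linearIndependent_one_tmul hv
  have hbi : b i = 0 := linearIndependent_iff'.1 hv' s b ((pow_eq_zero_iff hp).1 hpow) i hi
  rw [← map_eq_zero (algebraMap k K), ← hb, hbi, zero_pow hp]

theorem linearIndependent_pow_of_isGeometricallyReduced {k A ι : Type*} [Field k] [CommRing A]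
    [Algebra k A] [Algebra.IsGeometricallyReduced k A] (p : ℕ) [Fact p.Prime] [CharP k p]
    {v : ι → A} (hv : LinearIndependent k v) : LinearIndependent k fun i ↦ v i ^ p :=
  have : IsReduced (TensorProduct k (AlgebraicClosure k) A) :=
    (Algebra.isGeometricallyReduced_field_iff k A).1 ‹_›
  have : CharP (AlgebraicClosure k) p := charP_of_injective_algebraMap' k p
  have : ExpChar (AlgebraicClosure k) p := .prime Fact.out
  have : PerfectRing (AlgebraicClosure k) p := PerfectField.toPerfectRing p
  linearIndependent_pow_of_isReduced_tensorProduct (AlgebraicClosure k) p hv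

theorem isGeometricallyReduced_mvPolynomial (k σ : Type*) [Field k] :
    Algebra.IsGeometricallyReduced k (MvPolynomial σ k) := by
  rw [Algebra.isGeometricallyReduced_field_iff]
  let e := MvPolynomial.scalarRTensorAlgEquiv (R := k) (σ := σ) (N := AlgebraicClosure k)
  exact isReduced_of_injective e e.injective

theorem isGeometricallyReduced_of_isLocalization {k A : Type*} (B : Type*) [Field k] [CommRing A]
    [CommRing B] [Algebra k A] [Algebra k B] [Algebra A B] [IsScalarTower k A B]
    (M : Submonoid A) [IsLocalization M B] [Algebra.IsGeometricallyReduced k A] :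
    Algebra.IsGeometricallyReduced k B := by
  rw [Algebra.isGeometricallyReduced_field_iff]
  let e := IsLocalization.tensorProductEquivOfMapIncludeRight k (AlgebraicClosure k) M B
    (Localization (M.map (Algebra.TensorProduct.includeRight (R := k) (A := AlgebraicClosure k))))
  exact isReduced_of_injective e e.injective

theorem exists_transcendenceBasis_isSeparable_of_isGeometricallyReduced (k K : Type*) [Field k]
    [Field K] [Algebra k K] [Algebra.IsGeometricallyReduced k K] [Algebra.EssFiniteType k K] :
    ∃ s : Finset K, IsTranscendenceBasis k ((↑) : s → K) ∧
      Algebra.IsSeparable (IntermediateField.adjoin k (s : Set K)) K := by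
  obtain _ | ⟨p, _, _⟩ := CharP.exists' k
  · exact exists_isTranscendenceBasis_and_isSeparable_of_perfectField k K
  · have hp := (Fact.out : p.Prime)
    have : ExpChar k p := .prime hp
    exact exists_isTranscendenceBasis_and_isSeparable_of_linearIndepOn_pow_of_essFiniteType p hp
      fun s hs ↦ linearIndependent_pow_of_isGeometricallyReduced p hs

theorem exists_primitive_element_of_essFiniteType {E K : Type*} [Field E] [Field K]
    [Algebra E K] [Algebra.EssFiniteType E K] [Algebra.IsSeparable E K] :
    ∃ α : K, IntermediateField.adjoin E {α} = ⊤ := by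
  have : Algebra.FormallyUnramified E K :=
    (Algebra.FormallyUnramified.iff_isSeparable _ _).2 ‹_›
  have : Module.Finite E K := Algebra.FormallyUnramified.finite_of_free _ _
  exact Field.exists_primitive_element E K

theorem exists_adjoin_range_eq_top_of_isGeometricallyReduced (k K : Type*) [Field k] [Field K]
    [Algebra k K] [Algebra.EssFiniteType k K] [Algebra.IsGeometricallyReduced k K] {d : ℕ}
    (hd : Algebra.trdeg k K ≤ d) :
    ∃ θ : Fin (d + 1) → K, IntermediateField.adjoin k (Set.range θ) = ⊤ := by
  classical
  obtain ⟨s, hs, _⟩ := exists_transcendenceBasis_isSeparable_of_isGeometricallyReduced k K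
  have : Algebra.EssFiniteType (IntermediateField.adjoin k (s : Set K)) K := .of_comp k _ _
  obtain ⟨α, hα⟩ : ∃ α : K,
      IntermediateField.adjoin (IntermediateField.adjoin k (s : Set K)) {α} = ⊤ :=
    exists_primitive_element_of_essFiniteType
  have hs' : s.card ≤ d := by
    rw [← hs.cardinalMk_eq_trdeg] at hd
    simpa using hd
  have hcard : (insert α s).card ≤ d + 1 :=
    (Finset.card_insert_le _ _).trans (Nat.succ_le_succ hs')
  have : Nonempty (insert α s : Finset K) := ⟨⟨α, Finset.mem_insert_self _ _⟩⟩
  obtain ⟨f⟩ : Nonempty ((insert α s : Finset K) ↪ Fin (d + 1)) :=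
    Function.Embedding.nonempty_of_card_le (by simpa using hcard)
  refine ⟨fun i ↦ (Function.invFun f i : (insert α s : Finset K)), ?_⟩
  rw [Set.range_comp' Subtype.val, (Function.invFun_surjective f.injective).range_eq]
  have hr : Subtype.val '' (Set.univ : Set (insert α s : Finset K)) = (s : Set K) ∪ {α} := by
    ext
    simp
  rw [hr, ← IntermediateField.adjoin_adjoin_left, hα, IntermediateField.restrictScalars_top]

theorem ringKrullDim_le_of_isIntegral {R S : Type*} [CommRing R] [CommRing S]
    [IsDomain S] [Algebra R S] [FaithfulSMul R S] [Algebra.IsIntegral R S] :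
    ringKrullDim R ≤ ringKrullDim S := by
  refine iSup_le fun l ↦ ?_
  have hker : RingHom.ker (algebraMap R S) ≤ l.head.asIdeal := by
    rw [(RingHom.injective_iff_ker_eq_bot _).1 (FaithfulSMul.algebraMap_injective R S)]
    exact bot_le
  obtain ⟨P, hP, hPl⟩ :=
    Ideal.exists_ideal_over_prime_of_isIntegral_of_isDomain (S := S) l.head.asIdeal hker
  have : P.LiesOver l.head.asIdeal := ⟨hPl.symm⟩
  obtain ⟨l', hl', -⟩ := Ideal.exists_ltSeries_of_hasGoingUp l P
  rw [← hl']
  exact Order.LTSeries.length_le_krullDim l'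

theorem trdeg_le_of_ringKrullDim_le {k B : Type*} [Field k] [CommRing B] [IsDomain B]
    [Algebra k B] [Algebra.FiniteType k B] {d : ℕ} (hd : ringKrullDim B ≤ d) :
    Algebra.trdeg k B ≤ d := by
  obtain ⟨n, g, hg, hg'⟩ := exists_integral_inj_algHom_of_fg k B
  algebraize [g.toRingHom]
  have : FaithfulSMul (MvPolynomial (Fin n) k) B :=
    (faithfulSMul_iff_algebraMap_injective _ _).2 hg
  have : IsScalarTower k (MvPolynomial (Fin n) k) B := .of_algebraMap_eq' g.comp_algebraMap.symm
  have hdim : ringKrullDim (MvPolynomial (Fin n) k) ≤ d := ringKrullDim_le_of_isIntegral.trans hd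
  have htrdeg : Algebra.trdeg k B = n := by
    have h := lift_trdeg_add_eq k (MvPolynomial (Fin n) k) B
    simpa [MvPolynomial.trdeg_of_isDomain, trdeg_eq_zero] using h.symm
  rw [MvPolynomial.ringKrullDim_of_isNoetherianRing, ringKrullDim_eq_zero_of_field, zero_add,
    Nat.card_fin] at hdim
  rw [htrdeg]
  exact_mod_cast hdim

theorem exists_algHom_lift {k σ A B F : Type*} [CommRing k] [CommRing A] [CommRing B]
    [CommRing F] [Algebra k A] [Algebra k B] [Algebra k F] [Algebra (MvPolynomial σ k) A]
    [IsScalarTower k (MvPolynomial σ k) A] (M : Submonoid (MvPolynomial σ k)) [IsLocalization M A]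
    (π : A →ₐ[k] F) (ρ : B →ₐ[k] F) (hρ : Function.Surjective ρ) [IsLocalHom ρ] :
    ∃ φ : A →ₐ[k] B, ρ.comp φ = π := by
  choose b hb using fun i : σ ↦ hρ (π (algebraMap (MvPolynomial σ k) A (.X i)))
  have hφ : ρ.comp (MvPolynomial.aeval b) =
      π.comp (IsScalarTower.toAlgHom k (MvPolynomial σ k) A) :=
    MvPolynomial.algHom_ext fun i ↦ by simp [hb]
  have hu (m : M) : IsUnit (MvPolynomial.aeval b (m : MvPolynomial σ k)) := by
    refine isUnit_of_map_unit ρ _ ?_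
    rw [← AlgHom.comp_apply, hφ]
    exact (IsLocalization.map_units A m).map π
  refine ⟨IsLocalization.liftAlgHom hu, ?_⟩
  refine AlgHom.coe_ringHom_injective (IsLocalization.ringHom_ext M ?_)
  exact RingHom.ext fun x ↦ by simpa using congr($hφ x)

/-! ### Retracts of local rings of affine spaces -/

section AffineSpaceRetract

variable (k σ F : Type*) [Field k] [Field F] [Algebra k F]

/-- The field `F` is a retract, as a `k`-algebra, of the local ring of a (not necessarily closed)
point of the affine space with coordinates indexed by `σ`. For the function field of a variety this
is the algebraic form of being a rational retract of that affine space. -/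
def IsAffineSpaceRetract : Prop :=
  ∃ (p : Ideal (MvPolynomial σ k)) (_ : p.IsPrime) (ι : F →ₐ[k] Localization.AtPrime p)
    (π : Localization.AtPrime p →ₐ[k] F), π.comp ι = AlgHom.id k F

variable {k σ F}

theorem exists_localization_surjective_of_adjoin_range_eq_top {θ : σ → F}
    (hθ : IntermediateField.adjoin k (Set.range θ) = ⊤) :
    ∃ (p : Ideal (MvPolynomial σ k)) (_ : p.IsPrime) (ρ : Localization.AtPrime p →ₐ[k] F),
      Function.Surjective ρ := by
  let p := RingHom.ker (MvPolynomial.aeval (R := k) θ)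
  have hp : p.IsPrime := RingHom.ker_isPrime _
  have hu (m : p.primeCompl) : IsUnit (MvPolynomial.aeval θ (m : MvPolynomial σ k)) := .mk0 _ m.2
  refine ⟨p, hp, IsLocalization.liftAlgHom hu, fun x ↦ ?_⟩
  obtain ⟨r, s, rfl⟩ := (IntermediateField.mem_adjoin_range_iff k θ x).1 (hθ ▸ trivial)
  by_cases hs : MvPolynomial.aeval θ s = 0
  · exact ⟨0, by rw [map_zero, hs, div_zero]⟩
  · refine ⟨IsLocalization.mk' _ r (⟨s, hs⟩ : p.primeCompl), ?_⟩
    exact (IsLocalization.lift_mk'_spec ..).2 (mul_div_cancel₀ _ hs).symm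

theorem IsAffineSpaceRetract.isGeometricallyReduced (h : IsAffineSpaceRetract k σ F) :
    Algebra.IsGeometricallyReduced k F := by
  obtain ⟨p, hp, ι, -, -⟩ := h
  have := isGeometricallyReduced_mvPolynomial k σ
  have := isGeometricallyReduced_of_isLocalization (k := k) (Localization.AtPrime p) p.primeCompl
  exact .of_injective ι ι.toRingHom.injective

theorem IsAffineSpaceRetract.of_adjoin_range_eq_top {τ : Type*} (h : IsAffineSpaceRetract k σ F)
    {θ : τ → F} (hθ : IntermediateField.adjoin k (Set.range θ) = ⊤) :
    IsAffineSpaceRetract k τ F := by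
  obtain ⟨p, hp, ι, π, hπι⟩ := h
  obtain ⟨q, hq, ρ, hρ⟩ := exists_localization_surjective_of_adjoin_range_eq_top hθ
  have : IsLocalHom ρ := ⟨(Function.Surjective.isLocalHom ρ.toRingHom hρ).map_nonunit⟩
  obtain ⟨φ, hφ⟩ := exists_algHom_lift p.primeCompl π ρ hρ
  exact ⟨q, hq, φ.comp ι, ρ, by rw [← AlgHom.comp_assoc, hφ, hπι]⟩

theorem IsAffineSpaceRetract.of_trdeg_le [Algebra.EssFiniteType k F]
    (h : IsAffineSpaceRetract k σ F) {d : ℕ} (hd : Algebra.trdeg k F ≤ d) :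
    IsAffineSpaceRetract k (Fin (d + 1)) F := by
  have := h.isGeometricallyReduced
  obtain ⟨θ, hθ⟩ := exists_adjoin_range_eq_top_of_isGeometricallyReduced k F hd
  exact h.of_adjoin_range_eq_top hθ

end AffineSpaceRetract

/-! ### Rational retracts and local rings -/

section Composition

variable {X Y Z : Scheme.{u}} (f : X.PartialMap Y) (g : Y.PartialMap Z)

/-- The domain of definition of the composite `g ∘ f` of two partial maps. It may be empty, since
`f` is not assumed to be dominant. -/
abbrev compDomain : X.Opens :=
  f.domain.ι ''ᵁ f.hom ⁻¹ᵁ g.domain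

theorem compDomain_le : compDomain f g ≤ f.domain :=
  (Set.image_subset_range _ _).trans_eq Subtype.range_val

/-- The restriction of `f` to a morphism from the domain of `g ∘ f` to the domain of `g`. -/
noncomputable def compLift : (compDomain f g).toScheme ⟶ g.domain.toScheme :=
  (f.domain.ι.isoImage (f.hom ⁻¹ᵁ g.domain)).inv ≫ f.hom ∣_ g.domain

theorem compLift_ι : compLift f g ≫ g.domain.ι = X.homOfLE (compDomain_le f g) ≫ f.hom := by
  have h : (f.domain.ι.isoImage (f.hom ⁻¹ᵁ g.domain)).inv ≫ (f.hom ⁻¹ᵁ g.domain).ι =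
      X.homOfLE (compDomain_le f g) := by
    rw [← cancel_mono f.domain.ι, Category.assoc, Scheme.Hom.isoImage_inv_ι, Scheme.homOfLE_ι]
  rw [compLift, Category.assoc, morphismRestrict_ι, ← Category.assoc, h]

end Composition

theorem fromSpecStalkOfMem_closedPoint {X : Scheme.{u}} (U : X.Opens) {x : X} (hx : x ∈ U) :
    U.fromSpecStalkOfMem x hx (IsLocalRing.closedPoint (X.presheaf.stalk x)) = ⟨x, hx⟩ :=
  Subtype.ext <| .trans (by rw [← Scheme.Opens.fromSpecStalkOfMem_ι U x hx]; rfl)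
    (Scheme.fromSpecStalk_closedPoint (x := x))

theorem mem_compDomain_of_comp_ι_eq {X Y Z : Scheme.{u}} {f : X.PartialMap Y} {g : Y.PartialMap Z}
    {x : X} (hx : x ∈ f.domain) {c : Spec (X.presheaf.stalk x) ⟶ g.domain.toScheme}
    (hc : c ≫ g.domain.ι = f.fromSpecStalkOfMem hx) : x ∈ compDomain f g := by
  refine ⟨⟨x, hx⟩, ?_, rfl⟩
  have h : (c ≫ g.domain.ι) (IsLocalRing.closedPoint (X.presheaf.stalk x)) ∈ g.domain :=
    (c (IsLocalRing.closedPoint _)).2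
  rw [hc] at h
  exact fromSpecStalkOfMem_closedPoint f.domain hx ▸ h

theorem compEqId_of_fromSpecStalk {X P : Scheme.{u}} [IsIntegral X] (f : X.PartialMap P)
    (g : P.PartialMap X) {x : X} (hx : x ∈ f.domain)
    (c : Spec (X.presheaf.stalk x) ⟶ g.domain.toScheme)
    (hc : c ≫ g.domain.ι = f.fromSpecStalkOfMem hx) (hg : c ≫ g.hom = X.fromSpecStalk x) :
    f.CompEqId g := by
  have hxV : x ∈ compDomain f g := mem_compDomain_of_comp_ι_eq hx hc
  have hV : Dense (compDomain f g : Set X) := (compDomain f g).2.dense ⟨x, hxV⟩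
  have hl : (compDomain f g).fromSpecStalkOfMem x hxV ≫ compLift f g = c := by
    rw [← cancel_mono g.domain.ι, Category.assoc, compLift_ι, hc,
      ← f.fromSpecStalkOfMem_restrict hV (compDomain_le f g) hxV]
    rfl
  let e : X.PartialMap X := ⟨compDomain f g, hV, compLift f g ≫ g.hom⟩
  have he : e.equiv (.id X) := by
    refine Scheme.PartialMap.equiv_of_fromSpecStalkOfMem_eq (x := x) _ _ hxV trivial ?_
    rw [Scheme.PartialMap.fromSpecStalkOfMem_toPartialMap, Category.comp_id, ← hg, ← hl,
      Category.assoc]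
    rfl
  obtain ⟨W, hW, hWV, hWt, h⟩ := he
  refine ⟨W, hW, hWV.trans (compDomain_le f g), X.homOfLE hWV ≫ compLift f g, ?_, ?_⟩
  · rw [Category.assoc, compLift_ι, Scheme.homOfLE_homOfLE_assoc]
  · rw [Category.assoc]
    refine h.trans ?_
    exact (Category.assoc _ _ _).symm.trans ((Category.comp_id _).trans (X.homOfLE_ι hWt))

/-- `Y` is a rational retract of `P` over `B`: there are rational maps `Y ⇢ P` and `P ⇢ Y` over `B`
whose composite `Y ⇢ P ⇢ Y` is defined and equal to the identity. -/
def IsRationalRetract {Y P B : Scheme.{u}} (sY : Y ⟶ B) (sP : P ⟶ B) : Prop :=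
  ∃ (f : Y.PartialMap P) (g : P.PartialMap Y),
    f.IsOverStruct sY sP ∧ g.IsOverStruct sP sY ∧ f.CompEqId g

open Scheme.PartialMap in
theorem IsRationalRetract.of_stalk {Y P B : Scheme.{u}} [IsIntegral Y] [IrreducibleSpace P]
    [P.IsGermInjective] {sY : Y ⟶ B} {sP : P ⟶ B} [LocallyOfFiniteType sY]
    [LocallyOfFiniteType sP] {y : Y} {q : P} (σ : Y.presheaf.stalk y ⟶ P.presheaf.stalk q)
    (π : P.presheaf.stalk q ⟶ Y.presheaf.stalk y) (hσπ : σ ≫ π = 𝟙 _)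
    (hσ : Spec.map σ ≫ Y.fromSpecStalk y ≫ sY = P.fromSpecStalk q ≫ sP) :
    IsRationalRetract sY sP := by
  have hπ : Spec.map π ≫ P.fromSpecStalk q ≫ sP = Y.fromSpecStalk y ≫ sY := by
    rw [← hσ, ← Spec.map_comp_assoc, hσπ, Spec.map_id, Category.id_comp]
  rw [← Category.assoc] at hπ hσ
  refine ⟨ofFromSpecStalk sY sP _ hπ, ofFromSpecStalk sP sY _ hσ, ofFromSpecStalk_comp _ _ _ _,
    ofFromSpecStalk_comp _ _ _ _, compEqId_of_fromSpecStalk _ _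
      (mem_domain_ofFromSpecStalk _ _ _ _)
      (Spec.map π ≫ Scheme.Opens.fromSpecStalkOfMem _ q (mem_domain_ofFromSpecStalk _ _ _ _))
      ?_ ?_⟩
  · rw [fromSpecStalkOfMem_ofFromSpecStalk, Category.assoc, Scheme.Opens.fromSpecStalkOfMem_ι]
  · have h := fromSpecStalkOfMem_ofFromSpecStalk sP sY _ hσ
    rw [fromSpecStalkOfMem] at h
    rw [Category.assoc, h, ← Spec.map_comp_assoc, hσπ, Spec.map_id, Category.id_comp]

theorem exists_stalkHom_of_fromSpecStalk {Y P : Scheme.{u}} (g : P.PartialMap Y) {y : Y}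
    (c : Spec (Y.presheaf.stalk y) ⟶ g.domain.toScheme) (hc : c ≫ g.hom = Y.fromSpecStalk y) :
    ∃ (q : P) (hq : q ∈ g.domain) (σ : Y.presheaf.stalk y ⟶ P.presheaf.stalk q)
      (π : P.presheaf.stalk q ⟶ Y.presheaf.stalk y), σ ≫ π = 𝟙 _ ∧
      Spec.map σ ≫ Y.fromSpecStalk y = g.fromSpecStalkOfMem hq := by
  let q := (c ≫ g.domain.ι) (IsLocalRing.closedPoint (Y.presheaf.stalk y))
  have hq : q ∈ g.domain := (c (IsLocalRing.closedPoint _)).2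
  let π : P.presheaf.stalk q ⟶ Y.presheaf.stalk y := Scheme.stalkClosedPointTo (c ≫ g.domain.ι)
  have : IsLocalHom π.hom := Scheme.isLocalHom_stalkClosedPointTo _
  have hπc : Spec.map π ≫ g.domain.fromSpecStalkOfMem q hq = c := by
    rw [← cancel_mono g.domain.ι, Category.assoc, Scheme.Opens.fromSpecStalkOfMem_ι]
    exact Scheme.Spec_stalkClosedPointTo_fromSpecStalk _
  have hπ : Spec.map π ≫ g.fromSpecStalkOfMem hq = Y.fromSpecStalk y := by
    rw [← hc, ← hπc, Category.assoc]
    rfl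
  have hy : g.fromSpecStalkOfMem hq (IsLocalRing.closedPoint _) = y := by
    refine .trans ?_ (Scheme.fromSpecStalk_closedPoint (x := y))
    rw [← hπ]
    exact congrArg (g.fromSpecStalkOfMem hq) (IsLocalRing.comap_closedPoint π.hom).symm
  obtain ⟨σ, hσ⟩ : ∃ σ : Y.presheaf.stalk y ⟶ P.presheaf.stalk q,
      Spec.map σ ≫ Y.fromSpecStalk y = g.fromSpecStalkOfMem hq := by
    rw [← hy]
    exact ⟨_, Scheme.Spec_stalkClosedPointTo_fromSpecStalk _⟩
  refine ⟨q, hq, σ, π, Spec.map_injective ?_, hσ⟩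
  rw [← cancel_mono (Y.fromSpecStalk y), Spec.map_comp, Category.assoc, hσ, hπ, Spec.map_id,
    Category.id_comp]

theorem IsRationalRetract.exists_stalk {Y P B : Scheme.{u}} [IsIntegral Y] {sY : Y ⟶ B}
    {sP : P ⟶ B} (h : IsRationalRetract sY sP) :
    ∃ (q : P) (σ : Y.presheaf.stalk (genericPoint Y) ⟶ P.presheaf.stalk q)
      (π : P.presheaf.stalk q ⟶ Y.presheaf.stalk (genericPoint Y)), σ ≫ π = 𝟙 _ ∧
      Spec.map σ ≫ Y.fromSpecStalk (genericPoint Y) ≫ sY = P.fromSpecStalk q ≫ sP := by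
  obtain ⟨f, g, -, hg, U, hU, -, l, -, hl⟩ := h
  have hη : genericPoint Y ∈ U :=
    ((genericPoint_spec Y).mem_open_set_iff U.2).2 (by simpa using hU.nonempty)
  obtain ⟨q, hq, σ, π, hσπ, hσ⟩ := exists_stalkHom_of_fromSpecStalk g
    (U.fromSpecStalkOfMem _ hη ≫ l) (by rw [Category.assoc, hl, U.fromSpecStalkOfMem_ι])
  refine ⟨q, σ, π, hσπ, ?_⟩
  rw [reassoc_of% hσ, ← g.domain.fromSpecStalkOfMem_ι q hq, Category.assoc, ← hg]
  exact Category.assoc _ _ _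

theorem exists_iso_stalk_of_isOpenImmersion {R A : CommRingCat.{u}} {P : Scheme.{u}}
    (j : Spec R ⟶ P) [IsOpenImmersion j] (y : Spec R) (a : R ⟶ A)
    (e : A ≅ (Spec R).presheaf.stalk y) (he : Spec.map (a ≫ e.hom) = (Spec R).fromSpecStalk y) :
    ∃ e' : A ≅ P.presheaf.stalk (j y), Spec.map (a ≫ e'.hom) ≫ j = P.fromSpecStalk (j y) := by
  refine ⟨e ≪≫ (asIso (j.stalkMap y)).symm, ?_⟩
  rw [Iso.trans_hom, ← Category.assoc, Spec.map_comp, Category.assoc, he,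
    ← Scheme.SpecMap_stalkMap_fromSpecStalk j (x := y), ← Spec.map_comp_assoc]
  simp

theorem exists_localization_iso_stalk_of_isOpenImmersion {R : CommRingCat.{u}} {P : Scheme.{u}}
    (j : Spec R ⟶ P) [IsOpenImmersion j] (p : PrimeSpectrum R) :
    ∃ e : CommRingCat.of (Localization.AtPrime p.asIdeal) ≅ P.presheaf.stalk (j p),
      Spec.map (CommRingCat.ofHom (algebraMap R (Localization.AtPrime p.asIdeal)) ≫ e.hom) ≫ j =
        P.fromSpecStalk (j p) := by
  let e : Localization.AtPrime p.asIdeal ≃ₐ[R] (Spec.structureSheaf R).presheaf.stalk p :=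
    IsLocalization.algEquiv p.asIdeal.primeCompl _ _
  refine exists_iso_stalk_of_isOpenImmersion j p _ e.toRingEquiv.toCommRingCatIso ?_
  refine .trans (congrArg Spec.map ?_) (Spec.fromSpecStalk_eq' _ _).symm
  exact CommRingCat.hom_ext (RingHom.ext e.commutes)

/-! ### Function fields -/

/-- The `k`-algebra structure on the function field of an integral scheme over `k`. -/
noncomputable abbrev functionFieldAlgebra {k : Type u} [CommRing k] {Y : Scheme.{u}} [IsIntegral Y]
    (sY : Y ⟶ Spec (CommRingCat.of k)) : Algebra k Y.functionField :=
  (Spec.preimage (Y.fromSpecStalk (genericPoint Y) ≫ sY)).hom.toAlgebra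

section FunctionField

variable {k : Type u} {Y : Scheme.{u}} [IsIntegral Y]

theorem SpecMap_algebraMap_functionField [CommRing k] (sY : Y ⟶ Spec (CommRingCat.of k)) :
    letI := functionFieldAlgebra sY
    Spec.map (CommRingCat.ofHom (algebraMap k Y.functionField)) =
      Y.fromSpecStalk (genericPoint Y) ≫ sY :=
  Spec.map_preimage _

theorem exists_finiteType_isFractionRing_functionField [CommRing k]
    (sY : Y ⟶ Spec (CommRingCat.of k)) [LocallyOfFiniteType sY] :
    letI := functionFieldAlgebra sY
    ∃ (R : CommRingCat.{u}) (_ : IsDomain R) (_ : Algebra k R) (_ : Algebra R Y.functionField)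
      (j : Spec R ⟶ Y), IsOpenImmersion j ∧ IsScalarTower k R Y.functionField ∧
      Algebra.FiniteType k R ∧ IsFractionRing R Y.functionField := by
  obtain ⟨_, ⟨U, hU, rfl⟩, hη, -⟩ := Y.isBasis_affineOpens.exists_subset_of_mem_open
    (Set.mem_univ (genericPoint Y)) isOpen_univ
  replace hU : IsAffineOpen U := hU
  have : Nonempty U := ⟨_, hη⟩
  let β : CommRingCat.of k ⟶ Γ(Y, U) := Spec.preimage (hU.fromSpec ≫ sY)
  have hβ : Spec.map β = hU.fromSpec ≫ sY := Spec.map_preimage _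
  have hβf : β.hom.FiniteType := by
    have : LocallyOfFiniteType (Spec.map β) := by
      rw [hβ]
      infer_instance
    exact (HasRingHomProperty.Spec_iff (P := @LocallyOfFiniteType)).1 this
  have hβη : Spec.preimage (Y.fromSpecStalk (genericPoint Y) ≫ sY) =
      β ≫ Y.presheaf.germ U _ hη := by
    apply Spec.map_injective
    rw [Spec.map_preimage, Spec.map_comp, hβ, ← hU.fromSpecStalk_eq_fromSpecStalk hη,
      IsAffineOpen.fromSpecStalk, Category.assoc]
  let _ := functionFieldAlgebra sY
  let _ : Algebra k Γ(Y, U) := β.hom.toAlgebra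
  exact ⟨Γ(Y, U), inferInstance, inferInstance, inferInstance, hU.fromSpec, inferInstance,
    .of_algebraMap_eq' congr(($hβη).hom), hβf, functionField_isFractionRing_of_isAffineOpen Y U hU⟩

theorem essFiniteType_functionField [CommRing k] (sY : Y ⟶ Spec (CommRingCat.of k))
    [LocallyOfFiniteType sY] :
    letI := functionFieldAlgebra sY
    Algebra.EssFiniteType k Y.functionField := by
  let _ := functionFieldAlgebra sY
  obtain ⟨R, _, _, _, -, -, _, _, _⟩ := exists_finiteType_isFractionRing_functionField sY
  have := Algebra.EssFiniteType.of_isLocalization Y.functionField (nonZeroDivisors R)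
  exact .comp k R Y.functionField

theorem trdeg_functionField_le [Field k] (sY : Y ⟶ Spec (CommRingCat.of k))
    [LocallyOfFiniteType sY] {d : ℕ} (hd : topologicalKrullDim Y ≤ d) :
    letI := functionFieldAlgebra sY
    Algebra.trdeg k Y.functionField ≤ d := by
  let _ := functionFieldAlgebra sY
  obtain ⟨R, _, _, _, j, _, _, _, _⟩ := exists_finiteType_isFractionRing_functionField sY
  have hR : ringKrullDim R ≤ d :=
    (PrimeSpectrum.topologicalKrullDim_eq_ringKrullDim R).symm.trans_le
      (j.isOpenEmbedding.isInducing.topologicalKrullDim_le.trans hd)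
  have : Algebra.IsAlgebraic R Y.functionField :=
    IsLocalization.isAlgebraic _ (nonZeroDivisors R)
  have htrdeg : Algebra.trdeg k Y.functionField = Algebra.trdeg k R := by
    rw [← trdeg_add_eq k R, trdeg_eq_zero (R := R), add_zero]
  exact htrdeg.trans_le (trdeg_le_of_ringKrullDim_le hR)

end FunctionField

/-! ### Affine charts of projective spaces -/

theorem pow_mul_eval₂_of_isHomogeneous {σ R A : Type*} [CommSemiring R] [CommSemiring A]
    {p : MvPolynomial σ R} {n : ℕ} (hp : p.IsHomogeneous n) (g : R →+* A) (y : σ → A) (t : A) :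
    t ^ n * p.eval₂ g y = p.eval₂ g (fun j ↦ t * y j) := by
  rw [MvPolynomial.eval₂_eq, MvPolynomial.eval₂_eq, Finset.mul_sum]
  refine Finset.sum_congr rfl fun m hm ↦ ?_
  have hdeg : ∑ i ∈ m.support, m i = n := by
    rw [← Finsupp.degree_apply, Finsupp.degree_eq_weight_one]
    exact hp (MvPolynomial.mem_support_iff.1 hm)
  simp_rw [mul_pow, Finset.prod_mul_distrib, Finset.prod_pow_eq_pow_sum, hdeg]
  exact mul_left_comm ..

theorem X_mem_homogeneousSubmodule (R : Type*) [CommSemiring R] {σ : Type*} (i : σ) :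
    (MvPolynomial.X i : MvPolynomial σ R) ∈ MvPolynomial.homogeneousSubmodule σ R 1 :=
  MvPolynomial.isHomogeneous_X R i

/-- The coordinate ring of the standard affine chart `X i ≠ 0` of the projective space over `R` with
homogeneous coordinates indexed by `σ`. -/
abbrev ProjChartRing (R : Type*) [CommRing R] {σ : Type*} (i : σ) : Type _ :=
  HomogeneousLocalization.Away (MvPolynomial.homogeneousSubmodule σ R) (MvPolynomial.X i)

namespace ProjChartRing

variable (R : Type*) [CommRing R] {σ : Type*} (i : σ)

/-- The inclusion of the constants in the coordinate ring of a chart. -/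
noncomputable def const : R →+* ProjChartRing R i :=
  (HomogeneousLocalization.fromZeroRingHom (MvPolynomial.homogeneousSubmodule σ R) _).comp
    ((GradedRing.projZeroRingHom' (MvPolynomial.homogeneousSubmodule σ R)).comp MvPolynomial.C)

/-- The coordinate `X j / X i` on the chart `X i ≠ 0`. -/
noncomputable def coord (j : σ) : ProjChartRing R i :=
  HomogeneousLocalization.Away.mk _ (X_mem_homogeneousSubmodule R i) 1 (MvPolynomial.X j)
    (by simpa using X_mem_homogeneousSubmodule R j)

variable {R i}

theorem val_const (c : R) : (const R i c).val =
    algebraMap (MvPolynomial σ R) (Localization.Away (MvPolynomial.X i : MvPolynomial σ R))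
      (.C c) := by
  have h : (GradedRing.projZeroRingHom' (MvPolynomial.homogeneousSubmodule σ R)
      (MvPolynomial.C c) : MvPolynomial σ R) = .C c :=
    congrArg Subtype.val (GradedRing.projZeroRingHom'_apply_coe
      (MvPolynomial.homogeneousSubmodule σ R) ⟨MvPolynomial.C c, MvPolynomial.isHomogeneous_C _ _⟩)
  rw [← Localization.mk_one_eq_algebraMap]
  exact congrArg (fun p ↦ Localization.mk p 1) h

theorem algebraMap_X_mul_val_coord (j : σ) :
    algebraMap (MvPolynomial σ R) (Localization.Away (MvPolynomial.X i : MvPolynomial σ R)) (.X i) *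
      (coord R i j).val = algebraMap (MvPolynomial σ R) _ (.X j) := by
  have h : (coord R i j).val = Localization.mk (MvPolynomial.X j)
      (⟨MvPolynomial.X i ^ 1, 1, rfl⟩ : Submonoid.powers (MvPolynomial.X i)) := rfl
  rw [h, Localization.mk_eq_mk', IsLocalization.mul_mk'_eq_mk'_of_mul,
    IsLocalization.mk'_eq_iff_eq_mul, ← map_mul]
  simp [mul_comm]

theorem coord_self : coord R i i = 1 := by
  have h : IsUnit (algebraMap (MvPolynomial σ R)
      (Localization.Away (MvPolynomial.X i : MvPolynomial σ R)) (.X i)) :=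
    IsLocalization.Away.algebraMap_isUnit _
  refine HomogeneousLocalization.val_injective _ (h.mul_left_cancel ?_)
  rw [algebraMap_X_mul_val_coord, HomogeneousLocalization.val_one, mul_one]

theorem val_eval₂_const_coord {n : ℕ} {p : MvPolynomial σ R} (hp : p.IsHomogeneous n) :
    (p.eval₂ (const R i) (coord R i)).val =
      Localization.mk p (⟨MvPolynomial.X i ^ n, n, rfl⟩ : Submonoid.powers (MvPolynomial.X i)) := by
  let a : MvPolynomial σ R →+* Localization.Away (MvPolynomial.X i : MvPolynomial σ R) :=
    algebraMap _ _
  let v : ProjChartRing R i →+* Localization.Away (MvPolynomial.X i : MvPolynomial σ R) :=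
    algebraMap _ _
  have hconst : v.comp (const R i) = a.comp MvPolynomial.C := RingHom.ext val_const
  have hcoord (j : σ) : a (.X i) * v (coord R i j) = a (.X j) := algebraMap_X_mul_val_coord j
  have hv : a (.X i ^ n) * v (p.eval₂ (const R i) (coord R i)) = a p :=
    calc a (.X i ^ n) * v (p.eval₂ (const R i) (coord R i))
      _ = a (.X i) ^ n * p.eval₂ (a.comp MvPolynomial.C) (fun j ↦ v (coord R i j)) := by
        rw [map_pow, MvPolynomial.hom_eval₂, hconst]
      _ = p.eval₂ (a.comp MvPolynomial.C) (fun j ↦ a (.X j)) := by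
        simp_rw [pow_mul_eval₂_of_isHomogeneous hp, hcoord]
      _ = a p := by
        rw [← MvPolynomial.hom_eval₂, MvPolynomial.eval₂_eta]
  rw [Localization.mk_eq_mk']
  exact IsLocalization.eq_mk'_iff_mul_eq.2 ((mul_comm _ _).trans hv)

theorem eval₂Hom_const_coord_surjective :
    Function.Surjective (MvPolynomial.eval₂Hom (const R i) (coord R i)) := by
  intro x
  obtain ⟨n, p, hp, rfl⟩ :=
    HomogeneousLocalization.Away.mk_surjective _ (X_mem_homogeneousSubmodule R i) x
  refine ⟨p, HomogeneousLocalization.val_injective _ ?_⟩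
  exact val_eval₂_const_coord (by simpa using hp)

theorem exists_ringHom {A : Type*} [CommRing A] (g : R →+* A) {a : σ → A} (ha : a i = 1) :
    ∃ φ : ProjChartRing R i →+* A, (∀ c, φ (const R i c) = g c) ∧ ∀ j, φ (coord R i j) = a j := by
  have hu : IsUnit (MvPolynomial.eval₂Hom g a (.X i)) := by simp [ha]
  let ψ := IsLocalization.Away.lift (S := Localization.Away (MvPolynomial.X i : MvPolynomial σ R))
    (MvPolynomial.X i) hu
  refine ⟨ψ.comp (algebraMap (ProjChartRing R i) _), fun c ↦ ?_, fun j ↦ ?_⟩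
  · refine (congrArg ψ (val_const c)).trans ?_
    simp [ψ]
  · simpa [ψ, ha] using congrArg ψ (algebraMap_X_mul_val_coord j)

variable (R) {N : ℕ} (i : Fin (N + 1))

/-- The polynomial ring in the affine coordinates `X j / X i`, `j ≠ i`, maps to the coordinate ring
of the chart `X i ≠ 0`. -/
noncomputable def ofMvPolynomial : MvPolynomial (Fin N) R →+* ProjChartRing R i :=
  MvPolynomial.eval₂Hom (const R i) fun j ↦ coord R i (i.succAbove j)

theorem ofMvPolynomial_injective : Function.Injective (ofMvPolynomial R i) := by
  obtain ⟨ψ, hψ, hψ'⟩ := exists_ringHom (R := R) (i := i) MvPolynomial.C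
    (Fin.insertNth_apply_same (α := fun _ ↦ MvPolynomial (Fin N) R) i 1 MvPolynomial.X)
  have h : ψ.comp (ofMvPolynomial R i) = RingHom.id _ :=
    MvPolynomial.ringHom_ext (fun c ↦ by simp [ofMvPolynomial, hψ])
      fun j ↦ by simp [ofMvPolynomial, hψ']
  exact Function.LeftInverse.injective (g := ψ) (RingHom.congr_fun h)

theorem ofMvPolynomial_surjective : Function.Surjective (ofMvPolynomial R i) := by
  have h : (ofMvPolynomial R i).comp
      (MvPolynomial.eval₂Hom MvPolynomial.C (i.insertNth 1 MvPolynomial.X)) =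
      MvPolynomial.eval₂Hom (const R i) (coord R i) :=
    MvPolynomial.ringHom_ext (fun c ↦ by simp [ofMvPolynomial]) fun j ↦ by
      cases j using i.succAboveCases <;> simp [ofMvPolynomial, coord_self]
  exact .of_comp (g := MvPolynomial.eval₂Hom MvPolynomial.C (i.insertNth 1 MvPolynomial.X)) <| by
    rw [← RingHom.coe_comp, h]
    exact eval₂Hom_const_coord_surjective

/-- The chart `X i ≠ 0` of `ℙ^N` is an affine space with coordinates `X j / X i`, `j ≠ i`. -/
noncomputable def mvPolynomialEquiv : MvPolynomial (Fin N) R ≃+* ProjChartRing R i :=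
  .ofBijective (ofMvPolynomial R i) ⟨ofMvPolynomial_injective R i, ofMvPolynomial_surjective R i⟩

theorem mvPolynomialEquiv_C (c : R) : mvPolynomialEquiv R i (.C c) = const R i c :=
  MvPolynomial.eval₂_C ..

end ProjChartRing

namespace ProjSpace

variable (k : Type u) [Field k] (N : ℕ)

/-- The standard affine chart `X i ≠ 0` of `ℙ^N`, parametrized by `𝔸^N`. -/
noncomputable def affineChart (i : Fin (N + 1)) :
    Spec (CommRingCat.of (MvPolynomial (Fin N) k)) ⟶ ProjSpace k N :=
  Spec.map (ProjChartRing.mvPolynomialEquiv k i).toCommRingCatIso.inv ≫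
    Proj.awayι (MvPolynomial.homogeneousSubmodule (Fin (N + 1)) k) (MvPolynomial.X i)
      (X_mem_homogeneousSubmodule k i) one_pos

instance (i : Fin (N + 1)) : IsOpenImmersion (affineChart k N i) :=
  inferInstanceAs (IsOpenImmersion (Spec.map _ ≫
    Proj.awayι (MvPolynomial.homogeneousSubmodule (Fin (N + 1)) k) (MvPolynomial.X i)
      (X_mem_homogeneousSubmodule k i) one_pos))

theorem affineChart_structMap (i : Fin (N + 1)) :
    affineChart k N i ≫ structMap k N = Spec.map (CommRingCat.ofHom MvPolynomial.C) := by
  have h (R S : CommRingCat.{u}) (ψ : CommRingCat.of (ProjChartRing k i) ⟶ S)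
      (φ : R ⟶ CommRingCat.of (MvPolynomial.homogeneousSubmodule (Fin (N + 1)) k 0)) :
      (Spec.map ψ ≫ Proj.awayι (MvPolynomial.homogeneousSubmodule (Fin (N + 1)) k)
        (MvPolynomial.X i) (X_mem_homogeneousSubmodule k i) one_pos) ≫
          Proj.toSpecZero _ ≫ Spec.map φ =
      Spec.map ((φ ≫ CommRingCat.ofHom (HomogeneousLocalization.fromZeroRingHom _ _)) ≫ ψ) := by
    rw [Category.assoc, Proj.awayι_toSpecZero_assoc, ← Spec.map_comp, ← Spec.map_comp]
  refine (h _ _ _ _).trans (congrArg Spec.map (CommRingCat.hom_ext (RingHom.ext fun c ↦ ?_)))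
  exact (RingEquiv.symm_apply_eq _).2 (ProjChartRing.mvPolynomialEquiv_C k i c).symm

theorem iSup_basicOpen_X :
    ⨆ i, Proj.basicOpen (MvPolynomial.homogeneousSubmodule (Fin (N + 1)) k) (.X i) = ⊤ := by
  refine Proj.iSup_basicOpen_eq_top' _ _ (fun i ↦ ⟨1, X_mem_homogeneousSubmodule k i⟩)
    (top_le_iff.1 ?_)
  rintro p -
  induction p using MvPolynomial.induction_on with
  | C a =>
    exact Subalgebra.algebraMap_mem (Algebra.adjoin _ _)
      (⟨MvPolynomial.C a, MvPolynomial.isHomogeneous_C _ _⟩ :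
        MvPolynomial.homogeneousSubmodule (Fin (N + 1)) k 0)
  | add p q hp hq => exact add_mem hp hq
  | mul_X p j hp => exact mul_mem hp (Algebra.subset_adjoin ⟨j, rfl⟩)

theorem exists_affineChart_eq (x : ProjSpace k N) : ∃ i y, affineChart k N i y = x := by
  obtain ⟨i, hi⟩ := Opens.mem_iSup.1 ((iSup_basicOpen_X k N).symm ▸ trivial :
    x ∈ ⨆ i, Proj.basicOpen (MvPolynomial.homogeneousSubmodule (Fin (N + 1)) k) (.X i))
  rw [← Proj.opensRange_awayι _ _ (X_mem_homogeneousSubmodule k i) one_pos] at hi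
  obtain ⟨y, hy⟩ := hi
  obtain ⟨z, rfl⟩ := (Spec.map
    (ProjChartRing.mvPolynomialEquiv k i).toCommRingCatIso.inv).surjective y
  exact ⟨i, z, hy⟩

/-- The generic point of `ℙ^N`. -/
noncomputable def zeroPoint :
    ProjectiveSpectrum (MvPolynomial.homogeneousSubmodule (Fin (N + 1)) k) where
  asHomogeneousIdeal := ⊥
  isPrime := by
    rw [HomogeneousIdeal.toIdeal_bot]
    exact Ideal.isPrime_bot
  not_irrelevant_le h := by
    have hX : MvPolynomial.X 0 ∈
        HomogeneousIdeal.irrelevant (MvPolynomial.homogeneousSubmodule (Fin (N + 1)) k) := by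
      rw [HomogeneousIdeal.mem_irrelevant_iff, GradedRing.proj_apply,
        DirectSum.decompose_of_mem_ne _ (X_mem_homogeneousSubmodule k 0) one_ne_zero]
    exact MvPolynomial.X_ne_zero _ (h hX)

instance : IrreducibleSpace (ProjSpace k N) := by
  have h : closure {zeroPoint k N} = ⊤ := Set.eq_univ_of_forall fun x ↦
    (ProjectiveSpectrum.le_iff_mem_closure _ _ x).1 (bot_le : ⊥ ≤ x.asHomogeneousIdeal)
  have hirr : IsIrreducible (closure {zeroPoint k N}) := isIrreducible_singleton.closure
  exact (irreducibleSpace_def _).2 (h ▸ hirr)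

instance : (ProjSpace k N).IsGermInjective := by
  intro x
  obtain ⟨i, y, rfl⟩ := exists_affineChart_eq k N x
  have : IsDomain (CommRingCat.of (MvPolynomial (Fin N) k)) :=
    inferInstanceAs (IsDomain (MvPolynomial (Fin N) k))
  have : (Spec (CommRingCat.of (MvPolynomial (Fin N) k))).IsGermInjective := inferInstance
  exact isGermInjectiveAt_iff_of_isOpenImmersion.2 (this y)

instance : LocallyOfFiniteType (structMap k N) := by
  have hchart (i : Fin (N + 1)) : LocallyOfFiniteType (affineChart k N i ≫ structMap k N) := by
    rw [affineChart_structMap, HasRingHomProperty.Spec_iff (P := @LocallyOfFiniteType)]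
    exact (RingHom.finiteType_algebraMap (A := k) (B := MvPolynomial (Fin N) k)).2 inferInstance
  have : IsZariskiLocalAtSource @LocallyOfFiniteType.{u} :=
    HasRingHomProperty.instIsZariskiLocalAtSource (Q := RingHom.FiniteType)
  exact (IsZariskiLocalAtSource.iff_of_openCover (P := @LocallyOfFiniteType)
    (Scheme.Cover.mkOfCovers _ _ (affineChart k N) (exists_affineChart_eq k N)
      fun _ ↦ inferInstance)).2 hchart

variable {k N}

theorem exists_localization_iso_stalk (i : Fin (N + 1))
    (p : PrimeSpectrum (MvPolynomial (Fin N) k)) :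
    ∃ e : CommRingCat.of (Localization.AtPrime p.asIdeal) ≅
        (ProjSpace k N).presheaf.stalk (affineChart k N i p),
      Spec.map (CommRingCat.ofHom (algebraMap k (Localization.AtPrime p.asIdeal)) ≫ e.hom) =
        (ProjSpace k N).fromSpecStalk (affineChart k N i p) ≫ structMap k N := by
  obtain ⟨e, he⟩ := exists_localization_iso_stalk_of_isOpenImmersion (affineChart k N i) p
  refine ⟨e, ?_⟩
  rw [← he, Category.assoc, affineChart_structMap, ← Spec.map_comp]
  rfl

theorem exists_prime_localization_iso_stalk (q : ProjSpace k N) :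
    ∃ (p : Ideal (MvPolynomial (Fin N) k)) (_ : p.IsPrime)
      (e : CommRingCat.of (Localization.AtPrime p) ≅ (ProjSpace k N).presheaf.stalk q),
      Spec.map (CommRingCat.ofHom (algebraMap k (Localization.AtPrime p)) ≫ e.hom) =
        (ProjSpace k N).fromSpecStalk q ≫ structMap k N := by
  obtain ⟨i, p, rfl⟩ := exists_affineChart_eq k N q
  exact ⟨_, _, exists_localization_iso_stalk i p⟩

theorem exists_point_localization_iso_stalk (p : Ideal (MvPolynomial (Fin N) k)) [hp : p.IsPrime] :
    ∃ (q : ProjSpace k N)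
      (e : CommRingCat.of (Localization.AtPrime p) ≅ (ProjSpace k N).presheaf.stalk q),
      Spec.map (CommRingCat.ofHom (algebraMap k (Localization.AtPrime p)) ≫ e.hom) =
        (ProjSpace k N).fromSpecStalk q ≫ structMap k N :=
  ⟨_, exists_localization_iso_stalk 0 ⟨p, hp⟩⟩

variable {Y : Scheme.{u}} [IsIntegral Y] {sY : Y ⟶ Spec (CommRingCat.of k)}

theorem isAffineSpaceRetract_of_isRationalRetract (h : IsRationalRetract sY (structMap k N)) :
    letI := functionFieldAlgebra sY
    IsAffineSpaceRetract k (Fin N) Y.functionField := by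
  let _ := functionFieldAlgebra sY
  obtain ⟨q, σ, π, hσπ, hσ⟩ := h.exists_stalk
  obtain ⟨p, hp, e, he⟩ := exists_prime_localization_iso_stalk q
  let α : CommRingCat.of k ⟶ Y.presheaf.stalk (genericPoint Y) :=
    CommRingCat.ofHom (algebraMap k Y.functionField)
  have hα : Spec.map α = Y.fromSpecStalk (genericPoint Y) ≫ sY :=
    SpecMap_algebraMap_functionField sY
  have hασ : α ≫ σ ≫ e.inv = CommRingCat.ofHom (algebraMap k (Localization.AtPrime p)) := by
    rw [← Category.assoc, Iso.comp_inv_eq]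
    apply Spec.map_injective
    rw [he, Spec.map_comp, hα, hσ]
  have hσπ' : (σ ≫ e.inv) ≫ e.hom ≫ π = 𝟙 _ := by
    rw [Category.assoc, Iso.inv_hom_id_assoc, hσπ]
  have hαπ : CommRingCat.ofHom (algebraMap k (Localization.AtPrime p)) ≫ e.hom ≫ π = α := by
    rw [← hασ, Category.assoc, hσπ', Category.comp_id]
  exact ⟨p, hp, ⟨(σ ≫ e.inv).hom, fun c ↦ congr(($hασ).hom c)⟩,
    ⟨(e.hom ≫ π).hom, fun c ↦ congr(($hαπ).hom c)⟩, AlgHom.ext fun x ↦ congr(($hσπ').hom x)⟩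

theorem isRationalRetract_of_isAffineSpaceRetract [LocallyOfFiniteType sY] :
    letI := functionFieldAlgebra sY
    IsAffineSpaceRetract k (Fin N) Y.functionField → IsRationalRetract sY (structMap k N) := by
  let _ := functionFieldAlgebra sY
  rintro ⟨p, hp, ι, π, hπι⟩
  obtain ⟨q, e, he⟩ := exists_point_localization_iso_stalk p
  let ι' : Y.presheaf.stalk (genericPoint Y) ⟶ CommRingCat.of (Localization.AtPrime p) :=
    CommRingCat.ofHom ι.toRingHom
  let π' : CommRingCat.of (Localization.AtPrime p) ⟶ Y.presheaf.stalk (genericPoint Y) :=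
    CommRingCat.ofHom π.toRingHom
  let α : CommRingCat.of k ⟶ Y.presheaf.stalk (genericPoint Y) :=
    CommRingCat.ofHom (algebraMap k Y.functionField)
  have hα : Spec.map α = Y.fromSpecStalk (genericPoint Y) ≫ sY :=
    SpecMap_algebraMap_functionField sY
  have hι : α ≫ ι' = CommRingCat.ofHom (algebraMap k (Localization.AtPrime p)) :=
    CommRingCat.hom_ext (RingHom.ext ι.commutes)
  have hπι' : ι' ≫ π' = 𝟙 _ := CommRingCat.hom_ext (RingHom.ext fun x ↦ congr($hπι x))
  refine .of_stalk (ι' ≫ e.hom) (e.inv ≫ π') ?_ ?_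
  · rw [Category.assoc, Iso.hom_inv_id_assoc, hπι']
  · rw [← he, ← hα, ← Spec.map_comp, reassoc_of% hι]

end ProjSpace

theorem exists_rational_map_to_proj_dim_add_one_with_section_general
    (k : Type u) [Field k] (Y : Scheme.{u}) (sY : Y ⟶ Spec (CommRingCat.of k))
    [IsIntegral Y] [LocallyOfFiniteType sY] (hY : IsRetractRational k Y sY)
    (d : ℕ) (hd : topologicalKrullDim Y ≤ (d : WithBot ℕ∞)) :
    IsRationalRetract sY (ProjSpace.structMap k (d + 1)) := by
  let _ := functionFieldAlgebra sY
  obtain ⟨N, -, hN⟩ := hY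
  have := essFiniteType_functionField sY
  have hF : IsAffineSpaceRetract k (Fin N) Y.functionField :=
    ProjSpace.isAffineSpaceRetract_of_isRationalRetract hN
  exact ProjSpace.isRationalRetract_of_isAffineSpaceRetract
    (hF.of_trdeg_le (trdeg_functionField_le sY hd))

/-- **Remark after Lemma 1.**  Since any variety is birational to a hypersurface, any
retract rational `k`-variety `Y` admits a rational map `Y ⇢ ℙ^{dim Y + 1}` with a
rational section. -/
theorem exists_rational_map_to_proj_dim_add_one_with_section
    (k : Type u) [Field k] (Y : Scheme.{u}) (sY : Y ⟶ Spec (CommRingCat.of k))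
    [IsIntegral Y] [LocallyOfFiniteType sY] [QuasiCompact sY] [IsSeparated sY]
    (hY : IsRetractRational k Y sY)
    (d : ℕ) (hd : topologicalKrullDim Y = (d : WithBot ℕ∞)) :
    ∃ (f : Y.PartialMap (ProjSpace k (d + 1))) (g : (ProjSpace k (d + 1)).PartialMap Y),
      f.IsOverStruct sY (ProjSpace.structMap k (d + 1)) ∧
      g.IsOverStruct (ProjSpace.structMap k (d + 1)) sY ∧
      f.CompEqId g :=
  exists_rational_map_to_proj_dim_add_one_with_section_general k Y sY hY d hd.le
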